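/- arXiv:1006.4088 — 2 statements merged into one kernel-verified Lean document; each statement's English description precedes it below -/
import Mathlib

section
/- Let X ∈ ℝ^{n₁×n₂} have rank r, and let H ∈ ℝ^{n₁×n₂} satisfy ‖X + H‖_* ≤ ‖X‖_*. Then ‖H‖_* ≤ 2√(2r)·‖H‖_F; equivalently, if H ≠ 0 then its ℓ*-rank satisfies τ(H) ≤ 8r. -/
open scoped BigOperators

noncomputable section

/-- Frobenius norm of a real matrix. -/
def frobNorm {n₁ n₂ : ℕ} (X : Matrix (Fin n₁) (Fin n₂) ℝ) : ℝ :=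
  Real.sqrt (∑ i, ∑ j, (X i j) ^ 2)

/-- Singular values of a real matrix: square roots of eigenvalues of `X * Xᴴ`. -/
def singVals {n₁ n₂ : ℕ} (X : Matrix (Fin n₁) (Fin n₂) ℝ) : Fin n₁ → ℝ :=
  fun i => Real.sqrt ((Matrix.isHermitian_mul_conjTranspose_self X).eigenvalues i)

/-- Nuclear norm: sum of singular values. -/
def nuclearNorm {n₁ n₂ : ℕ} (X : Matrix (Fin n₁) (Fin n₂) ℝ) : ℝ :=
  ∑ i, singVals X i

/-- Operator norm: largest singular value. -/
def matOpNorm {n₁ n₂ : ℕ} (X : Matrix (Fin n₁) (Fin n₂) ℝ) : ℝ :=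
  ⨆ i, singVals X i

/-- ℓ*-rank. -/
def lstarRank {n₁ n₂ : ℕ} (X : Matrix (Fin n₁) (Fin n₂) ℝ) : ℝ :=
  nuclearNorm X ^ 2 / frobNorm X ^ 2

/-- Euclidean norm of a vector. -/
def vnorm {m : ℕ} (v : Fin m → ℝ) : ℝ :=
  Real.sqrt (∑ k, (v k) ^ 2)

/-- Matrix inner product. -/
def matInner {n₁ n₂ : ℕ} (X Y : Matrix (Fin n₁) (Fin n₂) ℝ) : ℝ :=
  (X.transpose * Y).trace

def cmsvMin {n₁ n₂ m : ℕ} (A : Matrix (Fin n₁) (Fin n₂) ℝ → (Fin m → ℝ)) (τ : ℝ) : ℝ :=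
  sInf {c | ∃ X : Matrix (Fin n₁) (Fin n₂) ℝ, X ≠ 0 ∧ lstarRank X ≤ τ ∧ c = vnorm (A X) / frobNorm X}

def cmsvMax {n₁ n₂ m : ℕ} (A : Matrix (Fin n₁) (Fin n₂) ℝ → (Fin m → ℝ)) (τ : ℝ) : ℝ :=
  sSup {c | ∃ X : Matrix (Fin n₁) (Fin n₂) ℝ, X ≠ 0 ∧ lstarRank X ≤ τ ∧ c = vnorm (A X) / frobNorm X}

def rcsvMin {n₁ n₂ m : ℕ} (A : Matrix (Fin n₁) (Fin n₂) ℝ → (Fin m → ℝ)) (r : ℕ) : ℝ :=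
  sInf {c | ∃ X : Matrix (Fin n₁) (Fin n₂) ℝ, X ≠ 0 ∧ X.rank ≤ r ∧ c = vnorm (A X) / frobNorm X}

def rcsvMax {n₁ n₂ m : ℕ} (A : Matrix (Fin n₁) (Fin n₂) ℝ → (Fin m → ℝ)) (r : ℕ) : ℝ :=
  sSup {c | ∃ X : Matrix (Fin n₁) (Fin n₂) ℝ, X ≠ 0 ∧ X.rank ≤ r ∧ c = vnorm (A X) / frobNorm X}

def mRIC {n₁ n₂ m : ℕ} (A : Matrix (Fin n₁) (Fin n₂) ℝ → (Fin m → ℝ)) (r : ℕ) : ℝ :=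
  sInf {δ : ℝ | 0 < δ ∧ ∀ X : Matrix (Fin n₁) (Fin n₂) ℝ, X ≠ 0 → X.rank ≤ r →
    1 - δ ≤ (vnorm (A X)) ^ 2 / (frobNorm X) ^ 2 ∧ (vnorm (A X)) ^ 2 / (frobNorm X) ^ 2 ≤ 1 + δ}

def opOf {n₁ n₂ m : ℕ} (A : Fin m → Matrix (Fin n₁) (Fin n₂) ℝ) :
    Matrix (Fin n₁) (Fin n₂) ℝ → (Fin m → ℝ) :=
  fun X k => matInner (A k) X

/-!
With `P` and `Q` the orthogonal projections onto the column and row spaces of `X`, split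
`H = H₀ + Y` where `Y = (1 - P) H (1 - Q)`. Then `H₀ = P H + (1 - P) H Q` has rank at most `2r`,
`‖H₀‖_F ≤ ‖H‖_F`, and `Y` has row and column spaces orthogonal to those of `X`, so that
`‖X + Y‖_* = ‖X‖_* + ‖Y‖_*`. Hence
`‖X‖_* + ‖Y‖_* = ‖(X + H) - H₀‖_* ≤ ‖X‖_* + ‖H₀‖_*`, which gives
`‖H‖_* ≤ 2‖H₀‖_* ≤ 2√(2r) ‖H₀‖_F`.

The triangle inequality for `‖·‖_*` comes from duality: `tr (W Xᴴ) ≤ ‖X‖_*` for every contraction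
`W`, with equality at the partial isometry of the polar decomposition of `X`.
-/

open Matrix
open scoped ComplexOrder MatrixOrder

section Projections

variable {m n K : Type*} [Fintype n] [Field K]

theorem rank_add_le (A B : Matrix m n K) : (A + B).rank ≤ A.rank + B.rank := by
  have hrange : LinearMap.range (A + B).mulVecLin ≤
      LinearMap.range A.mulVecLin ⊔ LinearMap.range B.mulVecLin := by
    rw [mulVecLin_add]
    exact LinearMap.range_add_le _ _
  exact (Submodule.finrank_mono hrange).trans (Submodule.finrank_add_le_finrank_add_finrank _ _)

theorem rank_sub_one_sub_mul_mul_one_sub_le [Fintype m] [DecidableEq m] [DecidableEq n]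
    (P : Matrix m m K) (Q : Matrix n n K) (A : Matrix m n K) :
    (A - (1 - P) * A * (1 - Q)).rank ≤ P.rank + Q.rank := by
  have hsplit : A - (1 - P) * A * (1 - Q) = P * A + (1 - P) * A * Q := by
    simp only [Matrix.sub_mul, Matrix.mul_sub, Matrix.one_mul, Matrix.mul_one]
    abel
  rw [hsplit]
  exact (rank_add_le _ _).trans
    (add_le_add (rank_mul_le_left P A) (rank_mul_le_right ((1 - P) * A) Q))

theorem trace_sub_mul_mul_conjTranspose_eq_zero {R : Type*} [CommRing R] [StarRing R] [Fintype m]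
    {P : Matrix m m R} {Q : Matrix n n R} (hP : IsStarProjection P) (hQ : IsStarProjection Q)
    (A : Matrix m n R) : ((A - P * A * Q) * (P * A * Q)ᴴ).trace = 0 := by
  have hPs : Pᴴ = P := hP.isSelfAdjoint
  have hQs : Qᴴ = Q := hQ.isSelfAdjoint
  have hPQ : P * (A - P * A * Q) * Q = 0 := by
    rw [Matrix.mul_sub, Matrix.sub_mul, sub_eq_zero, Matrix.mul_assoc P A, ← Matrix.mul_assoc P P,
      hP.isIdempotentElem.eq, Matrix.mul_assoc P, Matrix.mul_assoc A, hQ.isIdempotentElem.eq]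
  rw [conjTranspose_mul, conjTranspose_mul, hPs, hQs, ← Matrix.mul_assoc, ← Matrix.mul_assoc,
    trace_mul_comm, ← Matrix.mul_assoc, ← Matrix.mul_assoc, hPQ, Matrix.zero_mul, trace_zero]

end Projections

section FunctionalCalculus

variable {m 𝕜 : Type*} [RCLike 𝕜] [Fintype m]

open scoped Classical in
theorem sqrt_add_of_mul_eq_zero {A B : Matrix m m 𝕜} (hA : 0 ≤ A) (hB : 0 ≤ B)
    (hAB : A * B = 0) : CFC.sqrt (A + B) = CFC.sqrt A + CFC.sqrt B := by
  have hS : (CFC.sqrt A)ᴴ = CFC.sqrt A := (CFC.sqrt_nonneg A).isSelfAdjoint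
  have hT : (CFC.sqrt B)ᴴ = CFC.sqrt B := (CFC.sqrt_nonneg B).isSelfAdjoint
  have hST : CFC.sqrt A * CFC.sqrt B = 0 := by
    have hmul : (CFC.sqrt A)ᴴ * CFC.sqrt A * (CFC.sqrt B * (CFC.sqrt B)ᴴ) = 0 := by
      rwa [hS, hT, CFC.sqrt_mul_sqrt_self A, CFC.sqrt_mul_sqrt_self B]
    rwa [conjTranspose_mul_self_mul_eq_zero, mul_self_mul_conjTranspose_eq_zero] at hmul
  have hTS : CFC.sqrt B * CFC.sqrt A = 0 := by
    simpa [hS, hT] using congrArg conjTranspose hST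
  refine CFC.sqrt_unique ?_ (add_nonneg (CFC.sqrt_nonneg A) (CFC.sqrt_nonneg B))
  rw [mul_add, add_mul, add_mul, hST, hTS, CFC.sqrt_mul_sqrt_self A, CFC.sqrt_mul_sqrt_self B,
    zero_add, add_zero]

variable [DecidableEq m]

theorem trace_cfc {A : Matrix m m 𝕜} (hA : A.IsHermitian) (f : ℝ → ℝ) :
    (cfc f A).trace = ∑ i, (f (hA.eigenvalues i) : 𝕜) := by
  rw [hA.cfc_eq, IsHermitian.cfc, Unitary.conjStarAlgAut_apply, trace_mul_cycle,
    Unitary.coe_star_mul_self, Matrix.one_mul, trace_diagonal]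
  rfl

theorem cfc_mul_cfc (A : Matrix m m 𝕜) (f g : ℝ → ℝ) :
    cfc f A * cfc g A = cfc (fun x => f x * g x) A :=
  (cfc_mul f g A (A.finite_real_spectrum.continuousOn f)
    (A.finite_real_spectrum.continuousOn g)).symm

theorem sqrt_eq_cfc_real_sqrt {A : Matrix m m 𝕜} (hA : 0 ≤ A) : CFC.sqrt A = cfc Real.sqrt A := by
  rw [CFC.sqrt_eq_real_sqrt A hA, cfcₙ_eq_cfc]

end FunctionalCalculus

section PolarFactor

variable {m n 𝕜 : Type*} [RCLike 𝕜] [Fintype m] [DecidableEq m] [Fintype n]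

/-- The partial isometry `V` of the polar decomposition `X = (X Xᴴ)^(1/2) V`. It is encoded as
`((X Xᴴ)^(1/2))⁺ X`: since `0⁻¹ = 0`, applying `x ↦ (√x)⁻¹` gives a pseudoinverse. -/
def polarFactor (X : Matrix m n 𝕜) : Matrix m n 𝕜 :=
  cfc (fun x : ℝ => (√x)⁻¹) (X * Xᴴ) * X

theorem polarFactor_mul_conjTranspose (X : Matrix m n 𝕜) :
    polarFactor X * Xᴴ = CFC.sqrt (X * Xᴴ) := by
  have hA : 0 ≤ X * Xᴴ := (posSemidef_self_mul_conjTranspose X).nonneg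
  calc polarFactor X * Xᴴ
      = cfc (fun x : ℝ => (√x)⁻¹) (X * Xᴴ) * cfc id (X * Xᴴ) := by
        rw [polarFactor, Matrix.mul_assoc, cfc_id ℝ (X * Xᴴ)]
    _ = CFC.sqrt (X * Xᴴ) := by
        rw [cfc_mul_cfc, sqrt_eq_cfc_real_sqrt hA]
        congr 1 with x
        rw [id, inv_mul_eq_div, Real.div_sqrt]

theorem polarFactor_mul_conjTranspose_self (X : Matrix m n 𝕜) :
    polarFactor X * (polarFactor X)ᴴ = cfc (fun x : ℝ => √x * (√x)⁻¹) (X * Xᴴ) := by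
  have hf : (cfc (fun x : ℝ => (√x)⁻¹) (X * Xᴴ))ᴴ = cfc (fun x : ℝ => (√x)⁻¹) (X * Xᴴ) :=
    (cfc_predicate (R := ℝ) _ _ : IsSelfAdjoint _)
  nth_rw 2 [polarFactor]
  rw [conjTranspose_mul, hf, ← Matrix.mul_assoc, polarFactor_mul_conjTranspose,
    sqrt_eq_cfc_real_sqrt (posSemidef_self_mul_conjTranspose X).nonneg, cfc_mul_cfc]

theorem isStarProjection_polarFactor_mul_conjTranspose_self (X : Matrix m n 𝕜) :
    IsStarProjection (polarFactor X * (polarFactor X)ᴴ) := by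
  refine ⟨?_, isHermitian_mul_conjTranspose_self _⟩
  rw [polarFactor_mul_conjTranspose_self, IsIdempotentElem, cfc_mul_cfc]
  congr 1 with x
  rw [← mul_assoc, mul_inv_mul_cancel]

theorem polarFactor_mul_conjTranspose_mul (X : Matrix m n 𝕜) :
    polarFactor X * (polarFactor X)ᴴ * X = X := by
  set P := polarFactor X * (polarFactor X)ᴴ with hP
  have hA : 0 ≤ X * Xᴴ := (posSemidef_self_mul_conjTranspose X).nonneg
  have hPS : P * CFC.sqrt (X * Xᴴ) = CFC.sqrt (X * Xᴴ) := by
    rw [hP, polarFactor_mul_conjTranspose_self, sqrt_eq_cfc_real_sqrt hA, cfc_mul_cfc]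
    congr 1 with x
    exact mul_inv_mul_cancel _
  have hPA : (1 - P) * (X * Xᴴ) = 0 := by
    rw [← CFC.sqrt_mul_sqrt_self (X * Xᴴ) hA, ← Matrix.mul_assoc, Matrix.sub_mul, hPS,
      Matrix.one_mul, sub_self, Matrix.zero_mul]
  rw [mul_self_mul_conjTranspose_eq_zero, Matrix.sub_mul, Matrix.one_mul, sub_eq_zero] at hPA
  exact hPA.symm

end PolarFactor

theorem exists_isStarProjection_mul_eq_self {m n 𝕜 : Type*} [RCLike 𝕜] [Fintype m]
    [Fintype n] (X : Matrix m n 𝕜) :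
    ∃ P : Matrix m m 𝕜, IsStarProjection P ∧ P * X = X ∧ P.rank ≤ X.rank := by
  classical
  refine ⟨polarFactor X * (polarFactor X)ᴴ, isStarProjection_polarFactor_mul_conjTranspose_self X,
    polarFactor_mul_conjTranspose_mul X, ?_⟩
  rw [rank_self_mul_conjTranspose]
  exact rank_mul_le_right _ _

section FrobeniusNorm

variable {m n : ℕ}

theorem frobNorm_nonneg (X : Matrix (Fin m) (Fin n) ℝ) : 0 ≤ frobNorm X :=
  Real.sqrt_nonneg _

theorem frobNorm_sq (X : Matrix (Fin m) (Fin n) ℝ) : frobNorm X ^ 2 = (X * Xᴴ).trace := by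
  rw [frobNorm, Real.sq_sqrt (by positivity)]
  simp only [trace, diag_apply, Matrix.mul_apply, conjTranspose_apply, star_trivial, sq]

theorem frobNorm_le_frobNorm_add {X Y : Matrix (Fin m) (Fin n) ℝ} (hXY : (X * Yᴴ).trace = 0) :
    frobNorm X ≤ frobNorm (X + Y) := by
  have hYX : (Y * Xᴴ).trace = 0 := by
    rw [← conjTranspose_conjTranspose Y, ← conjTranspose_mul, trace_conjTranspose, hXY, star_zero]
  have hpyth : frobNorm (X + Y) ^ 2 = frobNorm X ^ 2 + frobNorm Y ^ 2 := by
    simp only [frobNorm_sq, conjTranspose_add, Matrix.mul_add, Matrix.add_mul, trace_add, hXY, hYX]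
    ring
  rw [← sq_le_sq₀ (frobNorm_nonneg X) (frobNorm_nonneg (X + Y)), hpyth]
  exact le_add_of_nonneg_right (sq_nonneg _)

theorem frobNorm_sub_mul_mul_le {P : Matrix (Fin m) (Fin m) ℝ} {Q : Matrix (Fin n) (Fin n) ℝ}
    (hP : IsStarProjection P) (hQ : IsStarProjection Q) (X : Matrix (Fin m) (Fin n) ℝ) :
    frobNorm (X - P * X * Q) ≤ frobNorm X := by
  simpa using frobNorm_le_frobNorm_add (trace_sub_mul_mul_conjTranspose_eq_zero hP hQ X)

end FrobeniusNorm

theorem trace_mul_conjTranspose_le_sum_sqrt {m n : Type*} [Fintype m] [Fintype n]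
    (A B : Matrix m n ℝ) :
    (A * Bᴴ).trace ≤ ∑ i, √((A * Aᴴ) i i) * √((B * Bᴴ) i i) := by
  simp only [trace, diag_apply, Matrix.mul_apply, conjTranspose_apply, star_trivial, ← sq]
  exact Finset.sum_le_sum fun i _ => Real.sum_mul_le_sqrt_mul_sqrt _ _ _

section NuclearNorm

variable {m n : ℕ}

theorem nuclearNorm_nonneg (X : Matrix (Fin m) (Fin n) ℝ) : 0 ≤ nuclearNorm X :=
  Finset.sum_nonneg fun _ _ => Real.sqrt_nonneg _

theorem nuclearNorm_eq_trace_sqrt (X : Matrix (Fin m) (Fin n) ℝ) :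
    nuclearNorm X = (CFC.sqrt (X * Xᴴ)).trace := by
  rw [sqrt_eq_cfc_real_sqrt (posSemidef_self_mul_conjTranspose X).nonneg,
    trace_cfc (isHermitian_mul_conjTranspose_self X)]
  rfl

theorem nuclearNorm_neg (X : Matrix (Fin m) (Fin n) ℝ) : nuclearNorm (-X) = nuclearNorm X := by
  simp only [nuclearNorm_eq_trace_sqrt, conjTranspose_neg, Matrix.neg_mul, Matrix.mul_neg,
    neg_neg]

theorem nuclearNorm_add_of_mul_conjTranspose_eq_zero {X Y : Matrix (Fin m) (Fin n) ℝ}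
    (hrow : X * Yᴴ = 0) (hcol : Xᴴ * Y = 0) :
    nuclearNorm (X + Y) = nuclearNorm X + nuclearNorm Y := by
  have hrow' : Y * Xᴴ = 0 := by simpa using congrArg conjTranspose hrow
  have hgram : (X + Y) * (X + Y)ᴴ = X * Xᴴ + Y * Yᴴ := by
    rw [conjTranspose_add, Matrix.add_mul, Matrix.mul_add, Matrix.mul_add, hrow, hrow', add_zero,
      zero_add]
  have hmul : X * Xᴴ * (Y * Yᴴ) = 0 := by
    rw [Matrix.mul_assoc, ← Matrix.mul_assoc Xᴴ, hcol, Matrix.zero_mul, Matrix.mul_zero]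
  simp only [nuclearNorm_eq_trace_sqrt]
  rw [hgram, sqrt_add_of_mul_eq_zero (posSemidef_self_mul_conjTranspose X).nonneg
    (posSemidef_self_mul_conjTranspose Y).nonneg hmul, trace_add]

theorem nuclearNorm_le_sqrt_rank_mul_frobNorm (X : Matrix (Fin m) (Fin n) ℝ) :
    nuclearNorm X ≤ √X.rank * frobNorm X := by
  have hX := isHermitian_mul_conjTranspose_self X
  set s := Finset.univ.filter fun i => hX.eigenvalues i ≠ 0 with hs
  have hcard : s.card = X.rank := by
    rw [← rank_self_mul_conjTranspose, hX.rank_eq_card_non_zero_eigs, Fintype.card_subtype]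
  have hsupp : ∑ i ∈ s, singVals X i = nuclearNorm X :=
    Finset.sum_subset (Finset.subset_univ s) fun i _ hi => by
      have hzero : hX.eigenvalues i = 0 := by simpa [hs] using hi
      rw [singVals, hzero, Real.sqrt_zero]
  have hsq : ∑ i, singVals X i ^ 2 = frobNorm X ^ 2 := by
    rw [frobNorm_sq, hX.trace_eq_sum_eigenvalues]
    exact Finset.sum_congr rfl fun i _ =>
      Real.sq_sqrt ((posSemidef_self_mul_conjTranspose X).eigenvalues_nonneg i)
  have hnonneg : 0 ≤ √X.rank * frobNorm X := mul_nonneg (Real.sqrt_nonneg _) (frobNorm_nonneg X)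
  rw [← sq_le_sq₀ (nuclearNorm_nonneg X) hnonneg]
  calc nuclearNorm X ^ 2 = (∑ i ∈ s, singVals X i) ^ 2 := by rw [hsupp]
    _ ≤ s.card * ∑ i ∈ s, singVals X i ^ 2 := sq_sum_le_card_mul_sum_sq
    _ ≤ X.rank * frobNorm X ^ 2 := by
      rw [hcard, ← hsq]
      gcongr
      exact Finset.subset_univ s
    _ = (√X.rank * frobNorm X) ^ 2 := by rw [mul_pow, Real.sq_sqrt (Nat.cast_nonneg _)]

theorem trace_mul_conjTranspose_le_nuclearNorm {W : Matrix (Fin m) (Fin n) ℝ} (hW : W * Wᴴ ≤ 1)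
    (X : Matrix (Fin m) (Fin n) ℝ) : (W * Xᴴ).trace ≤ nuclearNorm X := by
  have hX := isHermitian_mul_conjTranspose_self X
  set U : Matrix (Fin m) (Fin m) ℝ := ↑hX.eigenvectorUnitary
  have hUU : Uᴴ * U = 1 := Unitary.coe_star_mul_self hX.eigenvectorUnitary
  have hUU' : U * Uᴴ = 1 := Unitary.coe_mul_star_self hX.eigenvectorUnitary
  have hgram : ∀ A B : Matrix (Fin m) (Fin n) ℝ, Uᴴ * A * (Uᴴ * B)ᴴ = Uᴴ * (A * Bᴴ) * U :=
    fun A B => by simp only [conjTranspose_mul, conjTranspose_conjTranspose, Matrix.mul_assoc]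
  have hdiagX : ∀ i, (Uᴴ * X * (Uᴴ * X)ᴴ) i i = hX.eigenvalues i := fun i => by
    have hspec := hX.conjStarAlgAut_star_eigenvectorUnitary
    rw [Unitary.conjStarAlgAut_star_apply] at hspec
    rw [hgram]
    exact (congrFun (congrFun hspec i) i).trans (diagonal_apply_eq _ i)
  have hdiagW : ∀ i, (Uᴴ * W * (Uᴴ * W)ᴴ) i i ≤ 1 := fun i => by
    have hconj : Uᴴ * (W * Wᴴ) * U ≤ 1 := by
      have hconj' := star_left_conjugate_le_conjugate hW U
      rwa [star_eq_conjTranspose, Matrix.mul_one, hUU] at hconj'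
    rw [hgram]
    simpa using (le_iff.1 hconj).diag_nonneg (i := i)
  calc (W * Xᴴ).trace = (Uᴴ * W * (Uᴴ * X)ᴴ).trace := by
        rw [hgram, trace_mul_cycle, hUU', Matrix.one_mul]
    _ ≤ ∑ i, √((Uᴴ * W * (Uᴴ * W)ᴴ) i i) * √((Uᴴ * X * (Uᴴ * X)ᴴ) i i) :=
        trace_mul_conjTranspose_le_sum_sqrt _ _
    _ ≤ ∑ i, singVals X i := Finset.sum_le_sum fun i _ => by
        rw [hdiagX]
        exact mul_le_of_le_one_left (Real.sqrt_nonneg _) (Real.sqrt_le_one.2 (hdiagW i))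

theorem nuclearNorm_add_le (X Y : Matrix (Fin m) (Fin n) ℝ) :
    nuclearNorm (X + Y) ≤ nuclearNorm X + nuclearNorm Y := by
  set W := polarFactor (X + Y)
  have hW : W * Wᴴ ≤ 1 := (isStarProjection_polarFactor_mul_conjTranspose_self (X + Y)).le_one
  calc nuclearNorm (X + Y) = (W * (X + Y)ᴴ).trace := by
        rw [nuclearNorm_eq_trace_sqrt, polarFactor_mul_conjTranspose]
    _ = (W * Xᴴ).trace + (W * Yᴴ).trace := by
        rw [conjTranspose_add, Matrix.mul_add, trace_add]
    _ ≤ nuclearNorm X + nuclearNorm Y :=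
        add_le_add (trace_mul_conjTranspose_le_nuclearNorm hW X)
          (trace_mul_conjTranspose_le_nuclearNorm hW Y)

theorem lstarRank_le_sq_of_nuclearNorm_le {X : Matrix (Fin m) (Fin n) ℝ} {c : ℝ}
    (h : nuclearNorm X ≤ c * frobNorm X) : lstarRank X ≤ c ^ 2 := by
  refine div_le_of_le_mul₀ (sq_nonneg _) (sq_nonneg _) ?_
  rw [← mul_pow]
  exact pow_le_pow_left₀ (nuclearNorm_nonneg X) h 2

theorem exists_orthogonal_rank_sub_le_frobNorm_sub_le (X H : Matrix (Fin m) (Fin n) ℝ) :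
    ∃ Y : Matrix (Fin m) (Fin n) ℝ, X * Yᴴ = 0 ∧ Xᴴ * Y = 0 ∧
      (H - Y).rank ≤ 2 * X.rank ∧ frobNorm (H - Y) ≤ frobNorm H := by
  obtain ⟨P, hP, hPX, hPrank⟩ := exists_isStarProjection_mul_eq_self X
  obtain ⟨Q, hQ, hQX, hQrank⟩ := exists_isStarProjection_mul_eq_self Xᴴ
  rw [rank_conjTranspose] at hQrank
  have hX : (1 - P) * X = 0 := by rw [Matrix.sub_mul, Matrix.one_mul, hPX, sub_self]
  have hX' : (1 - Q) * Xᴴ = 0 := by rw [Matrix.sub_mul, Matrix.one_mul, hQX, sub_self]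
  refine ⟨(1 - P) * H * (1 - Q), ?_, ?_, ?_, frobNorm_sub_mul_mul_le hP.one_sub hQ.one_sub H⟩
  · rw [← conjTranspose_eq_zero, conjTranspose_mul, conjTranspose_conjTranspose, Matrix.mul_assoc,
      hX', Matrix.mul_zero]
  · have hP' : (1 - P)ᴴ = 1 - P := hP.one_sub.isSelfAdjoint
    rw [← conjTranspose_eq_zero, conjTranspose_mul, conjTranspose_conjTranspose, conjTranspose_mul,
      conjTranspose_mul, hP', Matrix.mul_assoc, Matrix.mul_assoc, hX, Matrix.mul_zero,
      Matrix.mul_zero]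
  · exact (rank_sub_one_sub_mul_mul_one_sub_le P Q H).trans (by lia)

theorem nuclearNorm_le_nuclearNorm_sub_of_nuclearNorm_add_le
    {X H Y : Matrix (Fin m) (Fin n) ℝ} (hrow : X * Yᴴ = 0) (hcol : Xᴴ * Y = 0)
    (hmin : nuclearNorm (X + H) ≤ nuclearNorm X) : nuclearNorm Y ≤ nuclearNorm (H - Y) := by
  refine le_of_add_le_add_left (a := nuclearNorm X) ?_
  calc nuclearNorm X + nuclearNorm Y = nuclearNorm (X + Y) :=
        (nuclearNorm_add_of_mul_conjTranspose_eq_zero hrow hcol).symm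
    _ = nuclearNorm ((X + H) + -(H - Y)) := by rw [neg_sub, add_add_sub_cancel]
    _ ≤ nuclearNorm (X + H) + nuclearNorm (-(H - Y)) := nuclearNorm_add_le _ _
    _ ≤ nuclearNorm X + nuclearNorm (H - Y) := by rw [nuclearNorm_neg]; gcongr

end NuclearNorm

/-- if `rank X = r` and `‖X + H‖_* ≤ ‖X‖_*`, then `‖H‖_* ≤ 2√(2r)·‖H‖_F`;
equivalently, if `H ≠ 0` then `τ(H) ≤ 8r`. -/
theorem stmt5 {n₁ n₂ : ℕ} (X H : Matrix (Fin n₁) (Fin n₂) ℝ) (r : ℕ)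
    (hrank : X.rank = r) (hmin : nuclearNorm (X + H) ≤ nuclearNorm X) :
    nuclearNorm H ≤ 2 * Real.sqrt (2 * r) * frobNorm H ∧
    (H ≠ 0 → lstarRank H ≤ 8 * r) := by
  subst hrank
  obtain ⟨Y, hrow, hcol, hYrank, hYfrob⟩ := exists_orthogonal_rank_sub_le_frobNorm_sub_le X H
  have hcone : nuclearNorm Y ≤ nuclearNorm (H - Y) :=
    nuclearNorm_le_nuclearNorm_sub_of_nuclearNorm_add_le hrow hcol hmin
  have hrank' : ((H - Y).rank : ℝ) ≤ 2 * X.rank := mod_cast hYrank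
  have hmain : nuclearNorm H ≤ 2 * √(2 * X.rank) * frobNorm H :=
    calc nuclearNorm H = nuclearNorm ((H - Y) + Y) := by rw [sub_add_cancel]
      _ ≤ nuclearNorm (H - Y) + nuclearNorm Y := nuclearNorm_add_le _ _
      _ ≤ 2 * nuclearNorm (H - Y) := by linarith
      _ ≤ 2 * (√(H - Y).rank * frobNorm (H - Y)) := by
        gcongr
        exact nuclearNorm_le_sqrt_rank_mul_frobNorm _
      _ ≤ 2 * (√(2 * X.rank) * frobNorm H) := by
        gcongr
        exact frobNorm_nonneg _
      _ = 2 * √(2 * X.rank) * frobNorm H := (mul_assoc _ _ _).symm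
  refine ⟨hmain, fun _ => (lstarRank_le_sq_of_nuclearNorm_le hmain).trans_eq ?_⟩
  rw [mul_pow, Real.sq_sqrt (by positivity)]
  ring

end
end

section
/- Suppose X ∈ ℝ^{n₁×n₂}, y = 𝒜(X) + w with ‖𝒜*(w)‖₂ ≤ λ, and X̂ satisfies the matrix Dantzig selector constraint ‖𝒜*(y − 𝒜(X̂))‖₂ ≤ λ. Then the error matrix H = X̂ − X satisfies ‖𝒜*(𝒜(H))‖₂ ≤ 2λ, and consequently ‖𝒜(H)‖₂² = ⟨𝒜(H), 𝒜(H)⟩ ≤ 2λ·‖H‖_*. -/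
open scoped BigOperators

noncomputable section

/-!
The image of the error under `𝒜` is the noise minus the residual of the estimate, so
`‖𝒜*(𝒜 H)‖ ≤ 2λ` is the triangle inequality for the operator norm. The second bound is the adjoint
identity `‖𝒜 H‖² = tr (Hᴴ 𝒜*(𝒜 H))` followed by trace duality `|tr (Aᴴ B)| ≤ ‖B‖ ‖A‖_*`. For the
latter, compute `tr (B Aᴴ)` in an orthonormal eigenbasis `uᵢ` of `A Aᴴ`: each term is at most
`‖B‖ ‖Aᴴ uᵢ‖`, and `‖Aᴴ uᵢ‖` is the singular value of `A` attached to `uᵢ`.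
-/

open Matrix

section L2Operator

open scoped Matrix.Norms.L2Operator

variable {𝕜 m n : Type*} [RCLike 𝕜] [Fintype m] [Fintype n]

lemma trace_eq_sum_inner_mulVec (u : OrthonormalBasis m 𝕜 (EuclideanSpace 𝕜 m))
    (A : Matrix m m 𝕜) :
    A.trace = ∑ i, inner 𝕜 (u i) (WithLp.toLp 2 (A *ᵥ u i)) := by
  classical
  rw [← trace_toLin_eq A (EuclideanSpace.basisFun m 𝕜).toBasis]
  exact LinearMap.trace_eq_sum_inner _ u

lemma norm_trace_conjTranspose_mul_le_sum [DecidableEq n]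
    (u : OrthonormalBasis m 𝕜 (EuclideanSpace 𝕜 m)) (A B : Matrix m n 𝕜) :
    ‖(Aᴴ * B).trace‖ ≤ ‖B‖ * ∑ i, ‖WithLp.toLp 2 (Aᴴ *ᵥ u i)‖ := by
  rw [trace_mul_comm, trace_eq_sum_inner_mulVec u, Finset.mul_sum]
  refine norm_sum_le_of_le _ fun i _ => ?_
  calc ‖inner 𝕜 (u i) (WithLp.toLp 2 ((B * Aᴴ) *ᵥ u i))‖
      ≤ ‖u i‖ * ‖WithLp.toLp 2 ((B * Aᴴ) *ᵥ u i)‖ := norm_inner_le_norm _ _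
    _ = ‖WithLp.toLp 2 (B *ᵥ (Aᴴ *ᵥ u i))‖ := by rw [u.norm_eq_one, one_mul, mulVec_mulVec]
    _ ≤ ‖B‖ * ‖WithLp.toLp 2 (Aᴴ *ᵥ u i)‖ := l2_opNorm_mulVec B (WithLp.toLp 2 (Aᴴ *ᵥ u i))

variable [DecidableEq m]

/-- The singular values of a real or complex matrix `A`, taken as the square roots of the
eigenvalues of `A * Aᴴ` (not of `Aᴴ * A`), hence indexed by the rows of `A`. They express both the
`ℓ²` operator norm and the trace norm. -/
def rowSingularValues (A : Matrix m n 𝕜) (i : m) : ℝ :=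
  √((isHermitian_mul_conjTranspose_self A).eigenvalues i)

/-- The trace norm (Schatten 1-norm) of a matrix, dual to the `ℓ²` operator norm under the pairing
`trace (Aᴴ * B)`. -/
def traceNorm (A : Matrix m n 𝕜) : ℝ :=
  ∑ i, rowSingularValues A i

lemma rowSingularValues_nonneg (A : Matrix m n 𝕜) (i : m) : 0 ≤ rowSingularValues A i :=
  Real.sqrt_nonneg _

lemma traceNorm_nonneg (A : Matrix m n 𝕜) : 0 ≤ traceNorm A :=
  Finset.sum_nonneg fun i _ => rowSingularValues_nonneg A i

lemma rowSingularValues_sq (A : Matrix m n 𝕜) (i : m) :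
    rowSingularValues A i ^ 2 = (isHermitian_mul_conjTranspose_self A).eigenvalues i :=
  Real.sq_sqrt (eigenvalues_self_mul_conjTranspose_nonneg A i)

lemma norm_conjTranspose_mulVec_eigenvectorBasis (A : Matrix m n 𝕜) (i : m) :
    ‖WithLp.toLp 2 (Aᴴ *ᵥ (isHermitian_mul_conjTranspose_self A).eigenvectorBasis i)‖ =
      rowSingularValues A i := by
  rw [← sq_eq_sq₀ (norm_nonneg _) (rowSingularValues_nonneg A i), rowSingularValues_sq,
    IsHermitian.eigenvalues_eq, ← inner_self_eq_norm_sq (𝕜 := 𝕜),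
    EuclideanSpace.inner_toLp_toLp, dotProduct_comm, star_mulVec, conjTranspose_conjTranspose,
    ← dotProduct_mulVec, mulVec_mulVec]

lemma l2_opNorm_eq_norm_eigenvalues {A : Matrix m m 𝕜} (hA : A.IsHermitian) :
    ‖A‖ = ‖hA.eigenvalues‖ :=
  calc ‖A‖ = ‖(diagonal (RCLike.ofReal ∘ hA.eigenvalues) : Matrix m m 𝕜)‖ := by
        conv_lhs => rw [hA.spectral_theorem, Unitary.conjStarAlgAut_apply, ← Unitary.coe_star,
          CStarRing.norm_mul_coe_unitary, CStarRing.norm_coe_unitary_mul]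
    _ = ‖(RCLike.ofReal ∘ hA.eigenvalues : m → 𝕜)‖ := l2_opNorm_diagonal _
    _ = ‖hA.eigenvalues‖ := by
        simp only [Pi.norm_def, ← norm_toNNReal, Function.comp_apply, RCLike.norm_ofReal,
          Real.norm_eq_abs]

variable [DecidableEq n]

lemma l2_opNorm_sq_eq_norm_eigenvalues (A : Matrix m n 𝕜) :
    ‖A‖ ^ 2 = ‖(isHermitian_mul_conjTranspose_self A).eigenvalues‖ := by
  rw [← l2_opNorm_eq_norm_eigenvalues, ← l2_opNorm_conjTranspose A, sq,
    ← l2_opNorm_conjTranspose_mul_self, conjTranspose_conjTranspose]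

lemma l2_opNorm_eq_iSup_rowSingularValues (A : Matrix m n 𝕜) :
    ‖A‖ = ⨆ i, rowSingularValues A i := by
  have hsup : 0 ≤ ⨆ i, rowSingularValues A i := Real.iSup_nonneg (rowSingularValues_nonneg A)
  refine le_antisymm (le_of_sq_le_sq ?_ hsup) (Real.iSup_le (fun i => ?_) (norm_nonneg A))
  · rw [l2_opNorm_sq_eq_norm_eigenvalues, pi_norm_le_iff_of_nonneg (sq_nonneg _)]
    intro i
    rw [← rowSingularValues_sq, norm_pow, Real.norm_of_nonneg (rowSingularValues_nonneg A i)]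
    gcongr
    · exact rowSingularValues_nonneg A i
    · exact le_ciSup (Set.finite_range (rowSingularValues A)).bddAbove i
  · rw [← sq_le_sq₀ (rowSingularValues_nonneg A i) (norm_nonneg A),
      l2_opNorm_sq_eq_norm_eigenvalues, rowSingularValues_sq]
    exact (Real.le_norm_self _).trans (norm_le_pi_norm (IsHermitian.eigenvalues _) i)

lemma norm_trace_conjTranspose_mul_le (A B : Matrix m n 𝕜) :
    ‖(Aᴴ * B).trace‖ ≤ ‖B‖ * traceNorm A := by
  simpa only [traceNorm, norm_conjTranspose_mulVec_eigenvectorBasis] using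
    norm_trace_conjTranspose_mul_le_sum
      (isHermitian_mul_conjTranspose_self A).eigenvectorBasis A B

theorem stmt8_general {E : Type*} [SeminormedAddCommGroup E] [InnerProductSpace 𝕜 E]
    (𝒜 : Matrix m n 𝕜 →ₗ[𝕜] E) (Astar : E →ₗ[𝕜] Matrix m n 𝕜)
    (hadj : ∀ X z, inner 𝕜 (𝒜 X) z = (Xᴴ * Astar z).trace)
    (X : Matrix m n 𝕜) (w : E) (lam : ℝ) (hw : ‖Astar w‖ ≤ lam)
    (y : E) (hy : y = 𝒜 X + w)
    (Xhat : Matrix m n 𝕜) (hfeas : ‖Astar (y - 𝒜 Xhat)‖ ≤ lam) :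
    ‖Astar (𝒜 (Xhat - X))‖ ≤ 2 * lam ∧
      ‖𝒜 (Xhat - X)‖ ^ 2 ≤ 2 * lam * traceNorm (Xhat - X) := by
  have hresidual : 𝒜 (Xhat - X) = w - (y - 𝒜 Xhat) := by
    rw [hy, map_sub]
    abel
  have hop : ‖Astar (𝒜 (Xhat - X))‖ ≤ 2 * lam :=
    calc ‖Astar (𝒜 (Xhat - X))‖ = ‖Astar w - Astar (y - 𝒜 Xhat)‖ := by rw [hresidual, map_sub]
      _ ≤ ‖Astar w‖ + ‖Astar (y - 𝒜 Xhat)‖ := norm_sub_le _ _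
      _ ≤ lam + lam := add_le_add hw hfeas
      _ = 2 * lam := (two_mul lam).symm
  refine ⟨hop, ?_⟩
  calc ‖𝒜 (Xhat - X)‖ ^ 2
      = ‖((Xhat - X)ᴴ * Astar (𝒜 (Xhat - X))).trace‖ := by
        rw [← hadj, ← inner_self_re_eq_norm, inner_self_eq_norm_sq]
    _ ≤ ‖Astar (𝒜 (Xhat - X))‖ * traceNorm (Xhat - X) := norm_trace_conjTranspose_mul_le _ _
    _ ≤ 2 * lam * traceNorm (Xhat - X) := by gcongr; exact traceNorm_nonneg _

lemma matOpNorm_eq_l2_opNorm {n₁ n₂ : ℕ} (X : Matrix (Fin n₁) (Fin n₂) ℝ) : matOpNorm X = ‖X‖ :=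
  (l2_opNorm_eq_iSup_rowSingularValues X).symm

end L2Operator

lemma nuclearNorm_eq_traceNorm {n₁ n₂ : ℕ} (X : Matrix (Fin n₁) (Fin n₂) ℝ) :
    nuclearNorm X = traceNorm X :=
  rfl

lemma vnorm_eq_norm_toLp {m : ℕ} (v : Fin m → ℝ) : vnorm v = ‖WithLp.toLp 2 v‖ := by
  simp only [vnorm, EuclideanSpace.norm_eq, Real.norm_eq_abs, sq_abs]

lemma sum_mul_eq_inner_toLp {m : ℕ} (v w : Fin m → ℝ) :
    ∑ k, v k * w k = inner ℝ (WithLp.toLp 2 v) (WithLp.toLp 2 w) := by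
  rw [EuclideanSpace.inner_toLp_toLp, star_trivial, dotProduct_comm, dotProduct]

lemma matInner_eq_trace_conjTranspose_mul {n₁ n₂ : ℕ} (X Y : Matrix (Fin n₁) (Fin n₂) ℝ) :
    matInner X Y = (Xᴴ * Y).trace := by
  rw [matInner, conjTranspose_eq_transpose_of_trivial]

/-- any matrix satisfying the Dantzig selector constraint has error matrix `H`
with `‖𝒜*(𝒜(H))‖₂ ≤ 2λ` and `‖𝒜(H)‖₂² ≤ 2λ·‖H‖_*`. -/
theorem stmt8 {n₁ n₂ m : ℕ}
    (𝒜 : Matrix (Fin n₁) (Fin n₂) ℝ →ₗ[ℝ] (Fin m → ℝ))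
    (Astar : (Fin m → ℝ) →ₗ[ℝ] Matrix (Fin n₁) (Fin n₂) ℝ)
    (hadj : ∀ (X : Matrix (Fin n₁) (Fin n₂) ℝ) (z : Fin m → ℝ),
      (∑ k, 𝒜 X k * z k) = matInner X (Astar z))
    (X : Matrix (Fin n₁) (Fin n₂) ℝ)
    (w : Fin m → ℝ) (lam : ℝ) (hw : matOpNorm (Astar w) ≤ lam)
    (y : Fin m → ℝ) (hy : y = 𝒜 X + w)
    (Xhat : Matrix (Fin n₁) (Fin n₂) ℝ)
    (hfeas : matOpNorm (Astar (y - 𝒜 Xhat)) ≤ lam) :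
    matOpNorm (Astar (𝒜 (Xhat - X))) ≤ 2 * lam ∧
    vnorm (𝒜 (Xhat - X)) ^ 2 ≤ 2 * lam * nuclearNorm (Xhat - X) := by
  simp only [sum_mul_eq_inner_toLp, matInner_eq_trace_conjTranspose_mul, matOpNorm_eq_l2_opNorm,
    nuclearNorm_eq_traceNorm, vnorm_eq_norm_toLp] at hadj hw hfeas ⊢
  let e := WithLp.linearEquiv 2 ℝ (Fin m → ℝ)
  exact stmt8_general (e.symm.toLinearMap ∘ₗ 𝒜) (Astar ∘ₗ e.toLinearMap)
    (fun X z => hadj X (e z)) X (e.symm w) lam hw (e.symm y) (congrArg e.symm hy) Xhat hfeas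

end
end
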